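/- Every L_n-injective R-module is injective if and only if the weak global dimension of R is at most n. -/

import Mathlib

open CategoryTheory

/-- Flatness of a module over an arbitrary (possibly noncommutative) ring,
via the equational criterion: every relation is a consequence of trivial relations. -/
def IsFlatMod (R : Type) [Ring R] (M : Type) [AddCommGroup M] [Module R M] : Prop :=
  ∀ (ι : Type) (_ : Fintype ι) (r : ι → R) (x : ι → M),
    (∑ i, r i • x i = 0) →
      ∃ (κ : Type) (_ : Fintype κ) (a : ι → κ → R) (y : κ → M),
        (∀ i, x i = ∑ j, a i j • y j) ∧ ∀ j, (∑ i, r i * a i j) = 0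

variable (R : Type) [Ring R]

/-- `Ext^n_R(M, N) = 0`. -/
def extVanish (n : ℕ) (M N : ModuleCat.{0} R) : Prop :=
  Subsingleton (((Ext ℤ (ModuleCat.{0} R) n).obj (Opposite.op M)).obj N)

/-- `M` has flat dimension at most `n`. -/
def fdLE : ℕ → ModuleCat.{0} R → Prop
  | 0, M => IsFlatMod R M
  | n+1, M => ∃ (K F : ModuleCat.{0} R) (f : K ⟶ F) (g : F ⟶ M),
      IsFlatMod R F ∧ Function.Injective f ∧ Function.Surjective g ∧
        Function.Exact f g ∧ fdLE n K

/-- `W` is `L_n`-injective: `Ext^1_R(M, W) = 0` for every `M` of flat dimension at most `n`. -/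
def LnInj (n : ℕ) (W : ModuleCat.{0} R) : Prop :=
  ∀ M : ModuleCat.{0} R, fdLE R n M → extVanish R 1 M W

/-! Flat dimension is detected by `Ext` into the character modules `T_I = (R / I)⋆` of the right
ideals `I`. For a short exact sequence `0 → L → P → M → 0` with `P` projective, the adjunction
`Hom_R(M, T_I) ≃ (R / I ⊗ M)⋆` shows that `Ext¹(M, T_I) = 0` iff `R / I ⊗ L → R / I ⊗ P` is
injective, and this holds for all `I` iff `M` is flat. By dimension shifting, `M` has flat dimension
at most `n` iff `Extⁿ⁺¹(M, T_I) = 0` for all `I`.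

Let `W` be the `n`-th cosyzygy of `T_I`, so that `Ext¹(M, W) = 0` iff `Extⁿ⁺¹(M, T_I) = 0`. Then
`W` is `L_n`-injective. If this forces `W` to be injective, then `Extⁿ⁺¹(M, T_I) = 0` for every `M`
and every `I`. -/

section RightIdealQuotient

open Submodule Pointwise

variable {R M N ι : Type*} [Ring R] [AddCommGroup M] [Module R M] [AddCommGroup N] [Module R N]

lemma mem_range_smul_top_iff {r : ι → R} {m : M} :
    m ∈ Set.range r • (⊤ : Submodule ℤ M) ↔ ∃ c : ι →₀ M, (c.sum fun i x ↦ r i • x) = m := by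
  classical
  refine ⟨fun hm ↦ ?_, ?_⟩
  · induction m, hm using set_smul_inductionOn with
    | smul₀ hr _ =>
      obtain ⟨i, rfl⟩ := hr
      exact ⟨Finsupp.single i _, Finsupp.sum_single_index (smul_zero _)⟩
    | smul₁ k _ ih =>
      obtain ⟨c, rfl⟩ := ih
      exact ⟨k • c, by simp [Finsupp.sum_smul_index', Finsupp.smul_sum, smul_comm _ k]⟩
    | add _ _ ih₁ ih₂ =>
      obtain ⟨c₁, rfl⟩ := ih₁
      obtain ⟨c₂, rfl⟩ := ih₂
      exact ⟨c₁ + c₂, Finsupp.sum_add_index' (fun _ ↦ smul_zero _) fun _ ↦ smul_add _⟩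
    | zero => exact ⟨0, Finsupp.sum_zero_index⟩
  · rintro ⟨c, rfl⟩
    exact sum_mem fun i _ ↦ mem_set_smul_of_mem_mem ⟨i, rfl⟩ mem_top

/-- The abelian group `M / I M = R / I ⊗ M`, where `I` is the right ideal of `R` generated by `s`.
Over a noncommutative ring it carries no `R`-module structure. Since `I M` is spanned by the
products `r • m` with `r ∈ s`, only the generating set `s` enters the definition. -/
abbrev QuotSetSMulTop (s : Set R) (M : Type*) [AddCommGroup M] [Module R M] : Type _ :=
  M ⧸ (s • ⊤ : Submodule ℤ M)

variable (s : Set R)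

namespace QuotSetSMulTop

/-- The map `M / I M → N / I N` induced by a linear map `M → N`: the functor `R / I ⊗ -`. -/
def map (f : M →ₗ[R] N) : QuotSetSMulTop s M →ₗ[ℤ] QuotSetSMulTop s N :=
  mapQ _ _ (f.restrictScalars ℤ) <| set_smul_le _ _ _ fun r m hr _ ↦ by
    rw [mem_comap, LinearMap.restrictScalars_apply, map_smul]
    exact mem_set_smul_of_mem_mem hr mem_top

@[simp]
lemma map_mk (f : M →ₗ[R] N) (m : M) :
    map s f (Submodule.Quotient.mk m) = Submodule.Quotient.mk (f m) := rfl

lemma map_injective_iff {f : M →ₗ[R] N} :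
    Function.Injective (map s f) ↔
      ∀ m, f m ∈ s • (⊤ : Submodule ℤ N) → m ∈ s • (⊤ : Submodule ℤ M) := by
  simp_rw [injective_iff_map_eq_zero, (Submodule.Quotient.mk_surjective _).forall, map_mk,
    Submodule.Quotient.mk_eq_zero]

end QuotSetSMulTop

/-- The left `R`-module of characters of `R / I`, where `I` is the right ideal of `R` generated
by `s`; the action is `(a • χ) x = χ (x * a)`. -/
def QuotCharacter : Type _ := CharacterModule (QuotSetSMulTop s R)

namespace QuotCharacter

instance : AddCommGroup (QuotCharacter s) :=
  inferInstanceAs (AddCommGroup (CharacterModule _))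

instance : FunLike (QuotCharacter s) (QuotSetSMulTop s R) (AddCircle (1 : ℚ)) :=
  inferInstanceAs (FunLike (CharacterModule _) _ _)

instance : AddMonoidHomClass (QuotCharacter s) (QuotSetSMulTop s R) (AddCircle (1 : ℚ)) where
  map_add (χ : CharacterModule _) := map_add χ
  map_zero (χ : CharacterModule _) := map_zero χ

variable {s}

@[ext]
lemma ext {χ ψ : QuotCharacter s}
    (h : ∀ x : R, χ (Submodule.Quotient.mk x) = ψ (Submodule.Quotient.mk x)) : χ = ψ :=
  CharacterModule.ext _ <| (Submodule.Quotient.mk_surjective _).forall.2 h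

instance : Module R (QuotCharacter s) where
  smul a χ := CharacterModule.dual (QuotSetSMulTop.map s (LinearMap.toSpanSingleton R R a)) χ
  one_smul χ := ext fun x ↦ congrArg (χ <| Submodule.Quotient.mk ·) (mul_one x)
  mul_smul a b χ := ext fun x ↦ congrArg (χ <| Submodule.Quotient.mk ·) (mul_assoc x a b).symm
  smul_zero _ := rfl
  smul_add _ _ _ := rfl
  add_smul a b χ := ext fun x ↦
    (congrArg (χ <| Submodule.Quotient.mk ·) (mul_add x a b)).trans (map_add χ (mkQ _ _) (mkQ _ _))
  zero_smul χ := ext fun x ↦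
    (congrArg (χ <| Submodule.Quotient.mk ·) (mul_zero x)).trans (map_zero χ)

lemma smul_apply_mk (a : R) (χ : QuotCharacter s) (x : R) :
    (a • χ) (Submodule.Quotient.mk x) = χ (Submodule.Quotient.mk (x * a)) := rfl

lemma apply_mk_eq_zero (χ : QuotCharacter s) {r : R} (hr : r ∈ s) :
    χ (Submodule.Quotient.mk r) = 0 := by
  have : r ∈ s • (⊤ : Submodule ℤ R) := by
    simpa using mem_set_smul_of_mem_mem hr (mem_top (x := (1 : R)))
  rw [(Submodule.Quotient.mk_eq_zero _).2 this]
  exact map_zero χ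

/-- The tensor-hom adjunction `Hom_R(M, (R / I)⋆) ≃ (R / I ⊗ M)⋆`. -/
def homEquiv : (M →ₗ[R] QuotCharacter s) ≃ CharacterModule (QuotSetSMulTop s M) where
  toFun φ :=
    let evalOne : M →+ AddCircle (1 : ℚ) :=
      { toFun m := φ m (Submodule.Quotient.mk 1)
        map_zero' := by rw [map_zero]; rfl
        map_add' m n := by rw [map_add]; rfl }
    (liftQ (s • ⊤) evalOne.toIntLinearMap <| set_smul_le _ _ _ fun r m hr _ ↦ by
      change φ (r • m) _ = 0
      rw [map_smul, smul_apply_mk, one_mul, apply_mk_eq_zero _ hr]).toAddMonoidHom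
  invFun χ :=
    { toFun m := CharacterModule.dual (QuotSetSMulTop.map s (LinearMap.toSpanSingleton R M m)) χ
      map_add' m n := ext fun x ↦
        (congrArg (χ <| Submodule.Quotient.mk ·) (smul_add x m n)).trans <|
          map_add χ (mkQ _ _) (mkQ _ _)
      map_smul' a m := ext fun x ↦
        congrArg (χ <| Submodule.Quotient.mk ·) (mul_smul x a m).symm }
  left_inv φ := LinearMap.ext fun m ↦ ext fun x ↦ by
    change φ (x • m) (Submodule.Quotient.mk 1) = _
    rw [map_smul, smul_apply_mk, one_mul]
  right_inv χ := CharacterModule.ext _ <| (Submodule.Quotient.mk_surjective _).forall.2 fun m ↦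
    congrArg (χ <| Submodule.Quotient.mk ·) (one_smul R m)

lemma homEquiv_comp (f : M →ₗ[R] N) (ψ : N →ₗ[R] QuotCharacter s) :
    homEquiv (ψ ∘ₗ f) = CharacterModule.dual (QuotSetSMulTop.map s f) (homEquiv ψ) :=
  CharacterModule.ext _ <| (Submodule.Quotient.mk_surjective _).forall.2 fun _ ↦ rfl

lemma comp_surjective_iff (f : M →ₗ[R] N) :
    Function.Surjective (fun ψ : N →ₗ[R] QuotCharacter s ↦ ψ ∘ₗ f) ↔
      Function.Injective (QuotSetSMulTop.map s f) := by
  rw [← CharacterModule.dual_surjective_iff_injective, ← homEquiv.comp_surjective,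
    ← homEquiv.surjective_comp (CharacterModule.dual _)]
  exact iff_of_eq (congrArg _ (funext (homEquiv_comp f)))

end QuotCharacter

end RightIdealQuotient

lemma sum_smul_sum_smul {R M ι κ : Type*} [Semiring R] [AddCommMonoid M] [Module R M]
    [Fintype ι] [Fintype κ] (r : ι → R) (a : ι → κ → R) (y : κ → M) :
    ∑ i, r i • ∑ j, a i j • y j = ∑ j, (∑ i, r i * a i j) • y j := by
  simp_rw [Finset.smul_sum, Finset.sum_smul, mul_smul]
  exact Finset.sum_comm

lemma exists_sum_smul_eq_map_sum_smul {R L P M ι κ : Type*} [Ring R] [AddCommGroup L] [Module R L]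
    [AddCommGroup P] [Module R P] [AddCommGroup M] [Module R M] [Fintype ι] [Fintype κ]
    {f : L →ₗ[R] P} {g : P →ₗ[R] M} (hg : Function.Surjective g) (hfg : Function.Exact f g)
    {p : ι → P} {a : ι → κ → R} {y : κ → M} (h : ∀ i, g (p i) = ∑ j, a i j • y j) :
    ∃ k : ι → L, ∀ r : ι → R, (∀ j, ∑ i, r i * a i j = 0) →
      ∑ i, r i • p i = f (∑ i, r i • k i) := by
  choose q hq using fun j ↦ hg (y j)
  have hker (i : ι) : ∃ k, f k = p i - ∑ j, a i j • q j := (hfg _).1 (by simp [hq, h])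
  choose k hk using hker
  refine ⟨k, fun r hr ↦ ?_⟩
  have hrq : ∑ i, r i • ∑ j, a i j • q j = 0 := by simp [sum_smul_sum_smul, hr]
  simp [hk, smul_sub, hrq]

section Flat

open Submodule Pointwise

variable {R} {L P M : Type} [AddCommGroup L] [Module R L] [AddCommGroup P] [Module R P]
  [AddCommGroup M] [Module R M]

lemma IsFlatMod.exists_of_forall_sum_smul_eq_zero (hM : IsFlatMod R M)
    {ι τ : Type} [Fintype ι] (s : Finset τ) (r : τ → ι → R) (x : ι → M)
    (h : ∀ t ∈ s, ∑ i, r t i • x i = 0) :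
    ∃ (κ : Type) (_ : Fintype κ) (a : ι → κ → R) (y : κ → M),
      (∀ i, x i = ∑ j, a i j • y j) ∧ ∀ t ∈ s, ∀ j, ∑ i, r t i * a i j = 0 := by
  classical
  induction s using Finset.induction_on with
  | empty => exact ⟨ι, ‹_›, fun i ↦ Pi.single i 1, x, by simp [Pi.single_apply], by simp⟩
  | insert t s _ ih =>
    obtain ⟨κ, _, a, y, hx, ha⟩ := ih fun t' ht' ↦ h t' (Finset.mem_insert_of_mem ht')
    have hy : ∑ j, (∑ i, r t i * a i j) • y j = 0 := by
      simp_rw [← sum_smul_sum_smul, ← hx, h t (Finset.mem_insert_self t s)]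
    obtain ⟨κ', _, b, z, hz, hb⟩ := hM κ ‹_› _ y hy
    refine ⟨κ', ‹_›, fun i k ↦ ∑ j, a i j * b j k, z, fun i ↦ ?_, fun t' ht' k ↦ ?_⟩
    · simp_rw [← sum_smul_sum_smul, ← hz, hx]
    · have hab : ∑ i, r t' i * ∑ j, a i j * b j k = ∑ j, (∑ i, r t' i * a i j) * b j k :=
        sum_smul_sum_smul (r t') a (b · k)
      rw [hab]
      obtain rfl | ht' := Finset.mem_insert.1 ht'
      · exact hb k
      · simp [ha t' ht']

lemma IsFlatMod.of_projective [Module.Projective R M] : IsFlatMod R M := by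
  classical
  obtain ⟨σ, hσ⟩ := Module.projective_def.1 ‹Module.Projective R M›
  intro ι _ r x h
  let t : Finset M := Finset.univ.biUnion fun i ↦ (σ (x i)).support
  have ht (i : ι) : (σ (x i)).support ⊆ t :=
    Finset.subset_biUnion_of_mem (fun i ↦ (σ (x i)).support) (Finset.mem_univ i)
  refine ⟨t, inferInstance, fun i m ↦ σ (x i) m, (↑), fun i ↦ ?_, fun m ↦ ?_⟩
  · rw [Finset.sum_coe_sort t fun m ↦ σ (x i) m • m,
      ← Finsupp.sum_of_support_subset _ (ht i) (fun m c ↦ c • m) fun _ _ ↦ zero_smul R _]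
    exact (hσ (x i)).symm
  · simpa [map_sum, Finsupp.finsetSum_apply] using congrArg (fun y ↦ σ y m) h

variable {f : L →ₗ[R] P} {g : P →ₗ[R] M}

lemma IsFlatMod.of_exact (hP : IsFlatMod R P) (hM : IsFlatMod R M) (hf : Function.Injective f)
    (hg : Function.Surjective g) (hfg : Function.Exact f g) : IsFlatMod R L := by
  intro ι _ r x hx
  have hfx : ∑ i, r i • f (x i) = 0 := by simpa using congrArg f hx
  obtain ⟨κ, _, a, p, hp, ha⟩ := hP ι ‹_› r _ hfx
  have hgp (i : ι) : ∑ j, a i j • g (p j) = 0 := by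
    simpa [hfg.apply_apply_eq_zero] using congrArg g (hp i).symm
  obtain ⟨κ', _, b, y, hy, hb⟩ :=
    hM.exists_of_forall_sum_smul_eq_zero Finset.univ a (g ∘ p) fun i _ ↦ hgp i
  obtain ⟨k, hk⟩ := exists_sum_smul_eq_map_sum_smul hg hfg hy
  exact ⟨κ, ‹_›, a, k, fun i ↦ hf <| (hp i).trans <| hk (a i) (hb i (Finset.mem_univ i)), ha⟩

lemma IsFlatMod.map_quotSetSMulTop_injective (hM : IsFlatMod R M) (hf : Function.Injective f)
    (hg : Function.Surjective g) (hfg : Function.Exact f g) (s : Set R) :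
    Function.Injective (QuotSetSMulTop.map s f) := by
  rw [QuotSetSMulTop.map_injective_iff, ← Subtype.range_coe (s := s)]
  intro l hl
  obtain ⟨c, hc⟩ := mem_range_smul_top_iff.1 hl
  replace hc : ∑ i : c.support, (i : R) • c i = f l := by
    rw [← hc, Finsupp.sum, Finset.sum_coe_sort c.support fun i ↦ (i : R) • c i]
  have hgc : ∑ i : c.support, (i : R) • g (c i) = 0 := by
    simpa [hfg.apply_apply_eq_zero] using congrArg g hc
  obtain ⟨κ, _, a, y, hy, ha⟩ := hM _ inferInstance _ _ hgc
  obtain ⟨k, hk⟩ := exists_sum_smul_eq_map_sum_smul hg hfg hy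
  rw [hf (hc.symm.trans (hk _ ha))]
  exact sum_mem fun i _ ↦ mem_set_smul_of_mem_mem ⟨i, rfl⟩ mem_top

lemma IsFlatMod.of_forall_map_quotSetSMulTop_injective (hP : IsFlatMod R P)
    (hg : Function.Surjective g) (hfg : Function.Exact f g)
    (h : ∀ s : Set R, Function.Injective (QuotSetSMulTop.map s f)) : IsFlatMod R M := by
  intro ι _ r x hx
  choose p hp using fun i ↦ hg (x i)
  obtain ⟨l, hl⟩ : ∃ l, f l = ∑ i, r i • p i := (hfg _).1 (by simp [hp, hx])
  have hmem : l ∈ Set.range r • (⊤ : Submodule ℤ L) := by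
    refine (QuotSetSMulTop.map_injective_iff _).1 (h _) l (hl ▸ sum_mem fun i _ ↦ ?_)
    exact mem_set_smul_of_mem_mem ⟨i, rfl⟩ mem_top
  obtain ⟨k, rfl⟩ := mem_range_smul_top_iff.1 hmem
  have hpk : ∑ i, r i • (p i - f (k i)) = 0 := by
    simp [smul_sub, ← hl, Finsupp.sum_fintype]
  obtain ⟨κ, _, a, y, hy, ha⟩ := hP ι ‹_› r _ hpk
  refine ⟨κ, ‹_›, a, g ∘ y, fun i ↦ ?_, ha⟩
  simpa [hp, hfg.apply_apply_eq_zero] using congrArg g (hy i)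

end Flat

section Ext

universe w v u

variable {C : Type u} [Category.{v} C] [Abelian C]

lemma isZero_ext_succ_iff (k : Type*) [Ring k] [Linear k C] [EnoughProjectives C] [HasExt.{w} C]
    (X Y : C) (n : ℕ) :
    Limits.IsZero (((Ext k C (n + 1)).obj (Opposite.op X)).obj Y) ↔
      Subsingleton (Abelian.Ext X Y (n + 1)) := by
  let P : ProjectiveResolution X := projectiveResolution X
  have isZero_iff : Limits.IsZero (((Ext k C (n + 1)).obj (Opposite.op X)).obj Y) ↔
      ∀ φ : P.complex.X (n + 1) ⟶ Y, P.complex.d (n + 2) (n + 1) ≫ φ = 0 →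
        ∃ ψ : P.complex.X n ⟶ Y, P.complex.d (n + 1) n ≫ ψ = φ := by
    rw [(P.isoExt (R := k) (n + 1) Y).isZero_iff,
      ← HomologicalComplex.exactAt_iff_isZero_homology,
      HomologicalComplex.exactAt_iff' _ n (n + 1) (n + 2) (by simp) (by simp),
      ShortComplex.moduleCat_exact_iff]
    rfl
  rw [isZero_iff]
  refine ⟨fun h ↦ subsingleton_of_forall_eq 0 fun e ↦ ?_, fun h φ hφ ↦ ?_⟩
  · obtain ⟨φ, hφ, rfl⟩ := P.extMk_surjective e (n + 2) rfl
    exact (P.extMk_eq_zero_iff φ (n + 2) rfl hφ n rfl).2 (h φ hφ)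
  · exact (P.extMk_eq_zero_iff φ (n + 2) rfl hφ n rfl).1 (Subsingleton.elim _ _)

variable [HasExt.{w} C] {S : ShortComplex C}

lemma subsingleton_ext_X₁ (hS : S.ShortExact) {Y : C} {n : ℕ}
    (h₂ : Subsingleton (Abelian.Ext S.X₂ Y n)) (h₃ : Subsingleton (Abelian.Ext S.X₃ Y (n + 1))) :
    Subsingleton (Abelian.Ext S.X₁ Y n) := by
  refine subsingleton_of_forall_eq 0 fun e ↦ ?_
  obtain ⟨e₂, rfl⟩ := Abelian.Ext.contravariant_sequence_exact₁ hS Y e (add_comm 1 n)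
    (Subsingleton.elim _ _)
  rw [Subsingleton.elim e₂ 0, Abelian.Ext.comp_zero]

lemma subsingleton_ext_X₃ (hS : S.ShortExact) {Y : C} {n : ℕ}
    (h₁ : Subsingleton (Abelian.Ext S.X₁ Y n)) (h₂ : Subsingleton (Abelian.Ext S.X₂ Y (n + 1))) :
    Subsingleton (Abelian.Ext S.X₃ Y (n + 1)) := by
  refine subsingleton_of_forall_eq 0 fun e ↦ ?_
  obtain ⟨e₁, rfl⟩ := Abelian.Ext.contravariant_sequence_exact₃ hS Y e
    (Subsingleton.elim _ _) (add_comm 1 n)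
  rw [Subsingleton.elim e₁ 0, Abelian.Ext.comp_zero]

lemma subsingleton_ext_one_iff_of_projective (hS : S.ShortExact) [Projective S.X₂] {Y : C} :
    Subsingleton (Abelian.Ext S.X₃ Y 1) ↔
      Function.Surjective fun ψ : S.X₂ ⟶ Y ↦ S.f ≫ ψ := by
  refine ⟨fun _ φ ↦ ?_, fun h ↦ subsingleton_of_forall_eq 0 fun e ↦ ?_⟩
  · obtain ⟨e, he⟩ := Abelian.Ext.contravariant_sequence_exact₁ hS Y (Abelian.Ext.mk₀ φ)
      (add_zero 1) (Subsingleton.elim _ _)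
    obtain ⟨ψ, rfl⟩ := (Abelian.Ext.mk₀_bijective _ _).2 e
    rw [Abelian.Ext.mk₀_comp_mk₀] at he
    exact ⟨ψ, (Abelian.Ext.mk₀_bijective _ _).1 he⟩
  · obtain ⟨e₁, rfl⟩ := Abelian.Ext.contravariant_sequence_exact₃ hS Y e
      (Abelian.Ext.eq_zero_of_projective _) (add_zero 1)
    obtain ⟨φ, rfl⟩ := (Abelian.Ext.mk₀_bijective _ _).2 e₁
    obtain ⟨ψ, rfl⟩ := h φ
    rw [← Abelian.Ext.mk₀_comp_mk₀, hS.extClass_comp_assoc]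

lemma subsingleton_ext_X₃_iff_of_injective (hS : S.ShortExact) [Injective S.X₂] (X : C) (n : ℕ) :
    Subsingleton (Abelian.Ext X S.X₃ (n + 1)) ↔ Subsingleton (Abelian.Ext X S.X₁ (n + 2)) := by
  refine ⟨fun _ ↦ subsingleton_of_forall_eq 0 fun e ↦ ?_,
    fun _ ↦ subsingleton_of_forall_eq 0 fun e ↦ ?_⟩
  · obtain ⟨e₃, rfl⟩ := Abelian.Ext.covariant_sequence_exact₁ X hS e
      (Abelian.Ext.eq_zero_of_injective _) rfl
    rw [Subsingleton.elim e₃ 0, Abelian.Ext.zero_comp]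
  · obtain ⟨e₂, rfl⟩ := Abelian.Ext.covariant_sequence_exact₃ X hS e rfl (Subsingleton.elim _ _)
    rw [Abelian.Ext.eq_zero_of_injective e₂, Abelian.Ext.zero_comp]

lemma exists_subsingleton_ext_one_iff [EnoughInjectives C] (n : ℕ) (Y : C) :
    ∃ W : C, ∀ X : C,
      Subsingleton (Abelian.Ext X W 1) ↔ Subsingleton (Abelian.Ext X Y (n + 1)) := by
  induction n generalizing Y with
  | zero => exact ⟨Y, fun _ ↦ Iff.rfl⟩
  | succ n ih =>
    obtain ⟨W, hW⟩ := ih (Limits.cokernel (Injective.ι Y))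
    have hS : (ShortComplex.mk (Injective.ι Y) (Limits.cokernel.π (Injective.ι Y))
        (by simp)).ShortExact := { exact := ShortComplex.exact_cokernel _ }
    exact ⟨W, fun X ↦ (hW X).trans (subsingleton_ext_X₃_iff_of_injective hS X n)⟩

end Ext

section FlatDimension

open ShortComplex.ShortExact (moduleCat_exact_iff_function_exact)

variable {R} {M : ModuleCat.{0} R}

lemma extVanish_succ_iff {n : ℕ} {N : ModuleCat.{0} R} :
    extVanish R (n + 1) M N ↔ Subsingleton (Abelian.Ext M N (n + 1)) := by
  rw [extVanish, ← ModuleCat.isZero_iff_subsingleton, isZero_ext_succ_iff]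

lemma subsingleton_ext_one_quotCharacter_iff {S : ShortComplex (ModuleCat.{0} R)}
    (hS : S.ShortExact) [Projective S.X₂] (s : Set R) :
    Subsingleton (Abelian.Ext S.X₃ (ModuleCat.of R (QuotCharacter s)) 1) ↔
      Function.Injective (QuotSetSMulTop.map s S.f.hom) := by
  rw [subsingleton_ext_one_iff_of_projective hS, ← QuotCharacter.comp_surjective_iff,
    ← ModuleCat.homEquiv.comp_surjective]
  exact ModuleCat.homEquiv.surjective_comp (· ∘ₗ S.f.hom)

lemma isFlatMod_iff_subsingleton_ext_one :
    IsFlatMod R M ↔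
      ∀ s : Set R, Subsingleton (Abelian.Ext M (ModuleCat.of R (QuotCharacter s)) 1) := by
  have hS := M.shortExact_projectiveShortComplex
  have hP : IsFlatMod R M.projectiveShortComplex.X₂ := .of_projective
  have hfg := (moduleCat_exact_iff_function_exact _).1 hS.exact
  refine Iff.trans ⟨fun hM ↦ ?_, ?_⟩
    (forall_congr' fun s ↦ (subsingleton_ext_one_quotCharacter_iff hS s).symm)
  · exact hM.map_quotSetSMulTop_injective hS.moduleCat_injective_f hS.moduleCat_surjective_g hfg
  · exact hP.of_forall_map_quotSetSMulTop_injective hS.moduleCat_surjective_g hfg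

lemma IsFlatMod.subsingleton_ext (hM : IsFlatMod R M) (n : ℕ) (s : Set R) :
    Subsingleton (Abelian.Ext M (ModuleCat.of R (QuotCharacter s)) (n + 1)) := by
  induction n generalizing M with
  | zero => exact isFlatMod_iff_subsingleton_ext_one.1 hM s
  | succ n ih =>
    have hS := M.shortExact_projectiveShortComplex
    have hP : IsFlatMod R M.projectiveShortComplex.X₂ := .of_projective
    have hK : IsFlatMod R M.projectiveShortComplex.X₁ :=
      hP.of_exact hM hS.moduleCat_injective_f hS.moduleCat_surjective_g
        ((moduleCat_exact_iff_function_exact _).1 hS.exact)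
    exact subsingleton_ext_X₃ hS (ih hK) (Abelian.Ext.subsingleton_of_projective _ _ _)

lemma fdLE_iff_subsingleton_ext {n : ℕ} :
    fdLE R n M ↔
      ∀ s : Set R, Subsingleton (Abelian.Ext M (ModuleCat.of R (QuotCharacter s)) (n + 1)) := by
  induction n generalizing M with
  | zero => exact isFlatMod_iff_subsingleton_ext_one
  | succ n ih =>
    refine ⟨fun ⟨K, F, f, g, hF, hf, hg, hfg, hK⟩ s ↦ ?_, fun h ↦ ?_⟩
    · have hS := ModuleCat.shortComplex_shortExact
        (ShortComplex.mk f g (by ext x; exact hfg.apply_apply_eq_zero x)) hfg hf hg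
      exact subsingleton_ext_X₃ hS (ih.1 hK s) (hF.subsingleton_ext _ s)
    · have hS := M.shortExact_projectiveShortComplex
      have hP : IsFlatMod R M.projectiveShortComplex.X₂ := .of_projective
      exact ⟨_, _, _, _, hP, hS.moduleCat_injective_f, hS.moduleCat_surjective_g,
        (moduleCat_exact_iff_function_exact _).1 hS.exact,
        ih.2 fun s ↦ subsingleton_ext_X₁ hS (Abelian.Ext.subsingleton_of_projective _ _ _) (h s)⟩

end FlatDimension

/-- Every `L_n`-injective module is injective iff the weak global dimension of `R`
is at most `n`, i.e. every module has flat dimension at most `n`. -/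
theorem stmt18 (n : ℕ) :
    (∀ W : ModuleCat.{0} R, LnInj R n W → Injective W) ↔
      ∀ M : ModuleCat.{0} R, fdLE R n M := by
  constructor
  · intro h M
    refine fdLE_iff_subsingleton_ext.2 fun s ↦ ?_
    obtain ⟨W, hW⟩ := exists_subsingleton_ext_one_iff n (ModuleCat.of R (QuotCharacter s))
    have hWinj : Injective W := h W fun N hN ↦
      extVanish_succ_iff.2 ((hW N).2 (fdLE_iff_subsingleton_ext.1 hN s))
    exact (hW M).1 (Abelian.Ext.subsingleton_of_injective M W 0)
  · intro h W hW
    exact injective_iff_subsingleton_ext_one.2 fun M ↦ extVanish_succ_iff.1 (hW M (h M))
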